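/- arXiv:1902.07937 — 2 statements merged into one kernel-verified Lean document; each statement's English description precedes it below -/
import Mathlib

section
/- Let H = (X,Y) be an undirected graph and let s ≥ 5 be an integer. Construct a 2-typed Schelling game with types red and blue, s strategic red agents, and the following topology G consisting of three connected components G1, G2, G3 with stubborn agents placed as described. G1 has vertex set X ∪ W with |W| = s−2 and edge set Y together with all edges {v,w} for v ∈ X, w ∈ W; a stubborn blue agent occupies each node of W. G2 is a complete bipartite graph with parts L and R' where |L| = s−2 and |R'| = 4s; stubborn red agents occupy 2s+1 nodes of R' and stubborn blue agents occupy the remaining 2s−1 nodes of R'. G3 consists of three unoccupied nodes x, y, z and 121 further nodes occupied by stubborn agents (41 red and 80 blue); x and y are adjacent; x is adjacent to exactly 1 of the stubborn red agents and exactly 2 of the stubborn blue agents of G3; y is adjacent to all 41 stubborn red agents and all 80 stubborn blue agents of G3; z is adjacent to exactly 5 of the stubborn red agents and exactly 7 of the stubborn blue agents of G3. Then this game admits an equilibrium assignment if and only if H contains a clique of size s. -/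
/-- A (social) Schelling game: agents `A`, of which `strategic` are the strategic
ones (the rest being stubborn), a social network `net` on the agents (the friends
of an agent are her neighbors in `net`, all other agents are her enemies), a
topology `top` on the set of locations `V`, and the preferred locations `loc`
of the (stubborn) agents. -/
structure SchellingGame (A V : Type) where
  strategic : Finset A
  net : SimpleGraph A
  top : SimpleGraph V
  loc : A → V

namespace SchellingGame

variable {A V : Type} [Fintype A] [DecidableEq A] [Fintype V] [DecidableEq V]

/-- There are `n ≥ 2` agents, strictly more locations than agents, and the
stubborn agents have pairwise distinct preferred locations. -/
def WellFormed (g : SchellingGame A V) : Prop :=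
  2 ≤ Fintype.card A ∧ Fintype.card A < Fintype.card V ∧
    Set.InjOn g.loc ↑(g.strategicᶜ)

/-- An assignment is an injective placement of the agents on the nodes of the
topology which places every stubborn agent at her preferred location. -/
def IsAssignment (g : SchellingGame A V) (v : A → V) : Prop :=
  Function.Injective v ∧ ∀ i ∉ g.strategic, v i = g.loc i

/-- The number of friends of `i` occupying nodes adjacent to `v i`. -/
noncomputable def fcount (g : SchellingGame A V) (v : A → V) (i : A) : ℕ :=
  Nat.card {j : A // g.net.Adj i j ∧ g.top.Adj (v i) (v j)}

/-- The number of enemies of `i` occupying nodes adjacent to `v i`. -/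
noncomputable def ecount (g : SchellingGame A V) (v : A → V) (i : A) : ℕ :=
  Nat.card {j : A // j ≠ i ∧ ¬ g.net.Adj i j ∧ g.top.Adj (v i) (v j)}

/-- The utility of agent `i` under assignment `v`: `0` if `i` has no adjacent
friends, and otherwise the fraction of friends among her occupied neighbors. -/
noncomputable def util (g : SchellingGame A V) (v : A → V) (i : A) : ℚ :=
  if g.fcount v i = 0 then 0
  else (g.fcount v i : ℚ) / ((g.fcount v i : ℚ) + (g.ecount v i : ℚ))

/-- An assignment is an equilibrium if no strategic agent can strictly increase
her utility by relocating to an unoccupied node. -/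
def IsEquilibrium (g : SchellingGame A V) (v : A → V) : Prop :=
  g.IsAssignment v ∧ ∀ i ∈ g.strategic, ∀ z : V, (∀ j : A, v j ≠ z) →
    g.util (Function.update v i z) i ≤ g.util v i

/-- The social welfare: the total utility of the strategic agents. -/
noncomputable def SW (g : SchellingGame A V) (v : A → V) : ℚ :=
  ∑ i ∈ g.strategic, g.util v i

/-- `g` is a `k`-typed Schelling game with type map `typ`: two distinct agents are
friends iff they have the same type, and every type is nonempty. -/
def IsTypedGame (g : SchellingGame A V) (k : ℕ) (typ : A → Fin k) : Prop :=
  (∀ i j : A, g.net.Adj i j ↔ (i ≠ j ∧ typ i = typ j)) ∧ ∀ c : Fin k, ∃ i : A, typ i = c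

end SchellingGame

/-- A star graph: one center node adjacent to all other nodes, and no other edges. -/
def IsStar {V : Type} (G : SimpleGraph V) : Prop :=
  ∃ c : V, ∀ a b : V, G.Adj a b ↔ (a ≠ b ∧ (a = c ∨ b = c))

/-- Agents of the reduction: `s` strategic red agents, `s-2` stubborn blue agents
(placed on `W`), `4s` stubborn agents placed on the part `R'` of `G2` (the first
`2s+1` red, the remaining `2s-1` blue), and `121` stubborn agents placed in `G3`
(the first `41` red, the remaining `80` blue). -/
abbrev A5 (s : ℕ) : Type := Fin s ⊕ (Fin (s - 2) ⊕ (Fin (4 * s) ⊕ Fin 121))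

/-- Nodes of the topology: `G1` has node set `X ∪ W` with `|W| = s-2`; `G2` is complete
bipartite with parts `L` (`|L| = s-2`) and `R'` (`|R'| = 4s`); `G3` has three nodes
`x, y, z` (coded by `Fin 3`) and `121` nodes for its stubborn agents. -/
abbrev V5 (X : Type) (s : ℕ) : Type :=
  (X ⊕ Fin (s - 2)) ⊕ ((Fin (s - 2) ⊕ Fin (4 * s)) ⊕ (Fin 3 ⊕ Fin 121))

/-- Types (red = 0, blue = 1). -/
def typ5 (s : ℕ) : A5 s → Fin 2
  | .inl _ => 0
  | .inr (.inl _) => 1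
  | .inr (.inr (.inl i)) => if (i : ℕ) < 2 * s + 1 then 0 else 1
  | .inr (.inr (.inr i)) => if (i : ℕ) < 41 then 0 else 1

/-- The social network of the 2-typed game: distinct agents of the same type. -/
def net5 (s : ℕ) : SimpleGraph (A5 s) where
  Adj i j := i ≠ j ∧ typ5 s i = typ5 s j
  symm := ⟨fun _ _ h => ⟨Ne.symm h.1, h.2.symm⟩⟩
  loopless := ⟨fun _ h => h.1 rfl⟩

/-- The edges of the topology (up to symmetrization): inside `G1`, the edges of `H` on
`X` together with all edges between `X` and `W`; inside `G2`, all edges between `L` and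
`R'`; inside `G3` (where `x, y, z` are coded by `0, 1, 2 : Fin 3`): the edge `{x,y}`,
edges from `x` to 1 red and 2 blue stubborn nodes, from `y` to all 41 red and 80 blue
stubborn nodes, and from `z` to 5 red and 7 blue stubborn nodes. -/
def rel5 (X : Type) (H : SimpleGraph X) (s : ℕ) : V5 X s → V5 X s → Prop
  | .inl (.inl u), .inl (.inl u') => H.Adj u u'
  | .inl (.inl _), .inl (.inr _) => True
  | .inr (.inl (.inl _)), .inr (.inl (.inr _)) => True
  | .inr (.inr (.inl a)), .inr (.inr (.inl b)) => (a : ℕ) = 0 ∧ (b : ℕ) = 1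
  | .inr (.inr (.inl a)), .inr (.inr (.inr i)) =>
      ((a : ℕ) = 0 ∧ ((i : ℕ) = 0 ∨ (i : ℕ) = 41 ∨ (i : ℕ) = 42)) ∨
      ((a : ℕ) = 1) ∨
      ((a : ℕ) = 2 ∧ ((i : ℕ) < 5 ∨ (41 ≤ (i : ℕ) ∧ (i : ℕ) < 48)))
  | _, _ => False

/-- The topology of the reduction. -/
def top5 (X : Type) (H : SimpleGraph X) (s : ℕ) : SimpleGraph (V5 X s) :=
  SimpleGraph.fromRel (rel5 X H s)

/-- Locations of the stubborn agents (the value on strategic agents is irrelevant):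
the `W`-agents on `W`, the `G2`-agents on `R'`, and the `G3`-agents on the stubborn
nodes of `G3`. -/
def loc5 (X : Type) (s : ℕ) : A5 s → V5 X s
  | .inl _ => .inr (.inr (.inl 0))
  | .inr (.inl i) => .inl (.inr i)
  | .inr (.inr (.inl i)) => .inr (.inl (.inr i))
  | .inr (.inr (.inr i)) => .inr (.inr (.inr i))

/-- The 2-typed Schelling game of the reduction: the strategic agents are exactly the
`s` red agents `Sum.inl`. -/
def game5 (X : Type) (H : SimpleGraph X) (s : ℕ) : SchellingGame (A5 s) (V5 X s) where
  strategic := Finset.univ.filter (fun p => p.isLeft = true)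
  net := net5 s
  top := top5 X H s
  loc := loc5 X s

open Finset

namespace Reduction5

variable {X : Type} {H : SimpleGraph X} {s : ℕ}

/-- A node of `X` in `G1`. -/
abbrev nodeX (s : ℕ) (u : X) : V5 X s := .inl (.inl u)

/-- A node of the part `L` of `G2`. -/
abbrev nodeL (X : Type) {s : ℕ} (l : Fin (s - 2)) : V5 X s := .inr (.inl (.inl l))

/-- One of the nodes `x, y, z` of `G3`. -/
abbrev node3 (X : Type) (s : ℕ) (t : Fin 3) : V5 X s := .inr (.inr (.inl t))

open Classical in
/-- Number of stubborn red agents next to `p`. -/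
noncomputable def redNear (H : SimpleGraph X) (s : ℕ) (p : V5 X s) : ℕ :=
  #{i : Fin (4 * s) | (i : ℕ) < 2 * s + 1 ∧ (top5 X H s).Adj p (.inr (.inl (.inr i)))} +
    #{i : Fin 121 | (i : ℕ) < 41 ∧ (top5 X H s).Adj p (.inr (.inr (.inr i)))}

open Classical in
/-- Number of stubborn blue agents next to `p`. -/
noncomputable def blueNear (H : SimpleGraph X) (s : ℕ) (p : V5 X s) : ℕ :=
  #{i : Fin (s - 2) | (top5 X H s).Adj p (.inl (.inr i))} +
    (#{i : Fin (4 * s) | 2 * s + 1 ≤ (i : ℕ) ∧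
        (top5 X H s).Adj p (.inr (.inl (.inr i)))} +
      #{i : Fin 121 | 41 ≤ (i : ℕ) ∧ (top5 X H s).Adj p (.inr (.inr (.inr i)))})

open Classical in
/-- Number of strategic agents other than `a` next to `p`. -/
noncomputable def stratNear (H : SimpleGraph X) (v : A5 s → V5 X s) (a : Fin s)
    (p : V5 X s) : ℕ :=
  #{j : Fin s | j ≠ a ∧ (top5 X H s).Adj p (v (.inl j))}

/-- The utility of the strategic agent `a` at node `p`, the others being placed by `v`. -/
noncomputable def payoff (H : SimpleGraph X) (v : A5 s → V5 X s) (a : Fin s)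
    (p : V5 X s) : ℚ :=
  ((stratNear H v a p + redNear H s p : ℕ) : ℚ) /
    ((stratNear H v a p + redNear H s p : ℕ) + (blueNear H s p : ℕ))

theorem inl_mem_strategic (a : Fin s) : .inl a ∈ (game5 X H s).strategic := by
  simp [game5]

theorem inr_notMem_strategic (b) : .inr b ∉ (game5 X H s).strategic := by
  simp [game5]

theorem fcount_update [DecidableEq X] {v : A5 s → V5 X s} (hv : (game5 X H s).IsAssignment v)
    (a : Fin s) (p : V5 X s) :
    (game5 X H s).fcount (Function.update v (.inl a) p) (.inl a) =
      stratNear H v a p + redNear H s p := by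
  classical
  have hl := fun b => hv.2 (.inr b) (inr_notMem_strategic b)
  unfold SchellingGame.fcount stratNear redNear
  rw [Nat.card_eq_fintype_card, Fintype.card_subtype]
  simp only [card_filter, Fintype.sum_sum_type]
  refine congrArg₂ (· + ·) ?_ ?_
  · refine sum_congr rfl fun j _ => ?_
    by_cases hj : j = a
    · simp [hj]
    · simp [hj, game5, net5, typ5, Ne.symm hj]
  · simp only [Function.update_self, Function.update_of_ne, ne_eq, reduceCtorEq,
      not_false_eq_true, hl]
    simp only [game5, net5, typ5, loc5, ne_eq, reduceCtorEq, not_false_eq_true, true_and,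
      zero_ne_one, false_and, if_false, sum_const_zero, zero_add]
    refine congrArg₂ (· + ·) ?_ ?_ <;> refine sum_congr rfl fun j _ => ?_ <;> congr 1 <;> simp

theorem ecount_update [DecidableEq X] {v : A5 s → V5 X s} (hv : (game5 X H s).IsAssignment v)
    (a : Fin s) (p : V5 X s) :
    (game5 X H s).ecount (Function.update v (.inl a) p) (.inl a) = blueNear H s p := by
  classical
  have hl := fun b => hv.2 (.inr b) (inr_notMem_strategic b)
  unfold SchellingGame.ecount blueNear
  rw [Nat.card_eq_fintype_card, Fintype.card_subtype]
  simp only [card_filter, Fintype.sum_sum_type]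
  rw [sum_eq_zero, zero_add]
  · simp only [Function.update_self, Function.update_of_ne, ne_eq, reduceCtorEq,
      not_false_eq_true, hl]
    simp only [game5, net5, typ5, loc5, ne_eq, reduceCtorEq, not_false_eq_true, true_and,
      zero_ne_one]
    refine congrArg₂ (· + ·) rfl (congrArg₂ (· + ·) ?_ ?_) <;>
      refine sum_congr rfl fun j _ => ?_ <;> congr 1 <;> simp
  · intro j _
    by_cases hj : j = a
    · simp [hj]
    · simp [hj, game5, net5, typ5, Ne.symm hj]

theorem util_update [DecidableEq X] {v : A5 s → V5 X s} (hv : (game5 X H s).IsAssignment v)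
    (a : Fin s) (p : V5 X s) :
    (game5 X H s).util (Function.update v (.inl a) p) (.inl a) = payoff H v a p := by
  unfold SchellingGame.util payoff
  rw [fcount_update hv, ecount_update hv]
  split_ifs with h
  · simp [h]
  · rfl

theorem util_eq_payoff [DecidableEq X] {v : A5 s → V5 X s} (hv : (game5 X H s).IsAssignment v)
    (a : Fin s) : (game5 X H s).util v (.inl a) = payoff H v a (v (.inl a)) := by
  rw [← util_update hv, Function.update_eq_self]

theorem payoff_nodeX (v : A5 s → V5 X s) (a : Fin s) (u : X) :
    payoff H v a (nodeX s u) =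
      (stratNear H v a (nodeX s u) : ℚ) / (stratNear H v a (nodeX s u) + (s - 2 : ℕ)) := by
  simp [payoff, redNear, blueNear, top5, rel5]

theorem stratNear_nodeL {v : A5 s → V5 X s} (hv : (game5 X H s).IsAssignment v) (a : Fin s)
    (l : Fin (s - 2)) : stratNear H v a (nodeL X l) = 0 := by
  classical
  rw [stratNear, card_eq_zero, filter_eq_empty_iff]
  rintro j - ⟨-, h⟩
  have hl := fun i => hv.2 (.inr (.inr (.inl i))) (inr_notMem_strategic _)
  rcases h' : v (.inl j) with (u | w) | (l' | i) | t | i <;>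
    simp [top5, rel5, h'] at h
  exact absurd (hv.1 (h'.trans (hl i).symm)) (by simp)

theorem card_fin_lt {m n : ℕ} (h : m ≤ n) : #{i : Fin n | (i : ℕ) < m} = m := by
  rw [Fin.card_filter_val_lt, min_eq_right h]

theorem card_fin_le {m n : ℕ} : #{i : Fin n | m ≤ (i : ℕ)} = n - m := by
  have := card_filter_add_card_filter_not (s := univ) (fun i : Fin n => (i : ℕ) < m)
  simp only [Fin.card_filter_val_lt, not_lt, card_univ, Fintype.card_fin] at this
  omega

theorem payoff_nodeL {v : A5 s → V5 X s} (hv : (game5 X H s).IsAssignment v) (hs : 5 ≤ s)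
    (a : Fin s) (l : Fin (s - 2)) :
    payoff H v a (nodeL X l) = (2 * s + 1 : ℚ) / (4 * s) := by
  have hr : redNear H s (nodeL X l) = 2 * s + 1 := by
    simpa [redNear, top5, rel5] using card_fin_lt (show 2 * s + 1 ≤ 4 * s by omega)
  have hb : blueNear H s (nodeL X l) = 4 * s - (2 * s + 1) := by
    simpa [blueNear, top5, rel5] using card_fin_le (m := 2 * s + 1) (n := 4 * s)
  rw [payoff, stratNear_nodeL hv, hr, hb, ← Nat.cast_add]
  congr 1
  · push_cast; ring
  · have : 0 + (2 * s + 1) + (4 * s - (2 * s + 1)) = 4 * s := by omega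
    rw [this]; push_cast; ring

theorem redNear_node3 (t : Fin 3) : redNear H s (node3 X s t) = ![1, 41, 5] t := by
  fin_cases t <;> simp [redNear, top5, rel5] <;> decide

theorem blueNear_node3 (t : Fin 3) : blueNear H s (node3 X s t) = ![2, 80, 7] t := by
  fin_cases t <;> simp [blueNear, top5, rel5] <;> decide

theorem payoff_node3 (v : A5 s → V5 X s) (a : Fin s) (t : Fin 3) :
    payoff H v a (node3 X s t) =
      (stratNear H v a (node3 X s t) + ![1, 41, 5] t : ℚ) /
        (stratNear H v a (node3 X s t) + ![3, 121, 12] t) := by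
  rw [payoff, redNear_node3, blueNear_node3]
  fin_cases t <;> simp <;> ring

theorem strategic_location {v : A5 s → V5 X s} (hv : (game5 X H s).IsAssignment v)
    (j : Fin s) :
    (∃ u, v (.inl j) = nodeX s u) ∨ (∃ l, v (.inl j) = nodeL X l) ∨
      ∃ t, v (.inl j) = node3 X s t := by
  have hl := fun b => hv.2 (.inr b) (inr_notMem_strategic b)
  have hne : ∀ b, v (.inl j) ≠ loc5 X s (.inr b) := fun b h =>
    absurd (hv.1 (h.trans (hl b).symm)) (by simp)
  rcases h : v (.inl j) with (u | w) | (l | i) | t | i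
  · exact .inl ⟨u, rfl⟩
  · exact absurd h (hne (.inl w))
  · exact .inr (.inl ⟨l, rfl⟩)
  · exact absurd h (hne (.inr (.inl i)))
  · exact .inr (.inr ⟨t, rfl⟩)
  · exact absurd h (hne (.inr (.inr i)))

theorem stratNear_le (v : A5 s → V5 X s) (a : Fin s) (p : V5 X s) :
    stratNear H v a p ≤ s - 1 := by
  classical
  calc stratNear H v a p ≤ #(univ.erase a) :=
        card_le_card fun j hj => by simpa using (mem_filter.1 hj).2.1
    _ = s - 1 := by simp

theorem adj_of_le_stratNear {v : A5 s → V5 X s} {a : Fin s} {p : V5 X s}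
    (h : s - 1 ≤ stratNear H v a p) {j : Fin s} (hj : j ≠ a) :
    (top5 X H s).Adj p (v (.inl j)) := by
  classical
  have heq := eq_of_subset_of_card_le
    (s := {j : Fin s | j ≠ a ∧ (top5 X H s).Adj p (v (.inl j))}) (t := univ.erase a)
    (fun j hj => by simpa using (mem_filter.1 hj).2.1) (by simpa [stratNear] using h)
  have hmem : j ∈ univ.erase a := by simpa using hj
  rw [← heq] at hmem
  exact (mem_filter.1 hmem).2.2

theorem stratNear_node3_le {v : A5 s → V5 X s} (hv : (game5 X H s).IsAssignment v)
    (a : Fin s) (t : Fin 3) : stratNear H v a (node3 X s t) ≤ 1 := by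
  classical
  refine card_le_one.2 fun i hi j hj => ?_
  have key : ∀ k, (top5 X H s).Adj (node3 X s t) (v (.inl k)) →
      v (.inl k) = node3 X s (1 - t) := by
    intro k hk
    rcases strategic_location hv k with ⟨u, h⟩ | ⟨l, h⟩ | ⟨t', h⟩
    · simp [h, top5, rel5] at hk
    · simp [h, top5, rel5] at hk
    · rw [h] at hk ⊢
      fin_cases t <;> fin_cases t' <;> simp [top5, rel5] at hk ⊢
  exact Sum.inl_injective (hv.1 ((key i (mem_filter.1 hi).2.2).trans
    (key j (mem_filter.1 hj).2.2).symm))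

theorem payoff_node3_le {v : A5 s → V5 X s} (hv : (game5 X H s).IsAssignment v)
    (a : Fin s) (t : Fin 3) : payoff H v a (node3 X s t) ≤ 1 / 2 := by
  have h : (stratNear H v a (node3 X s t) : ℚ) ≤ 1 := mod_cast stratNear_node3_le hv a t
  have h0 : (0 : ℚ) ≤ stratNear H v a (node3 X s t) := by positivity
  rw [payoff_node3]
  generalize (stratNear H v a (node3 X s t) : ℚ) = d at h h0 ⊢
  fin_cases t <;> simp <;> rw [div_le_iff₀ (by positivity)] <;> linarith

theorem half_lt_payoff_nodeX {v : A5 s → V5 X s} {a : Fin s} {u : X} (hs : 5 ≤ s)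
    (h : 1 / 2 < payoff H v a (nodeX s u)) : s - 1 ≤ stratNear H v a (nodeX s u) := by
  rw [payoff_nodeX] at h
  have hpos : (0 : ℚ) < (s - 2 : ℕ) := by
    have : 0 < s - 2 := by omega
    exact_mod_cast this
  rw [lt_div_iff₀ (by positivity)] at h
  have : ((s - 2 : ℕ) : ℚ) < stratNear H v a (nodeX s u) := by linarith
  have : s - 2 < stratNear H v a (nodeX s u) := mod_cast this
  omega

theorem half_lt_payoff_nodeL {v : A5 s → V5 X s} (hv : (game5 X H s).IsAssignment v)
    (hs : 5 ≤ s) (a : Fin s) (l : Fin (s - 2)) : 1 / 2 < payoff H v a (nodeL X l) := by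
  have : (0 : ℚ) < s := by exact_mod_cast (by omega : 0 < s)
  rw [payoff_nodeL hv hs, lt_div_iff₀ (by positivity)]
  linarith

theorem payoff_le_of_isEquilibrium [DecidableEq X] {v : A5 s → V5 X s}
    (hv : (game5 X H s).IsEquilibrium v) (a : Fin s) {p : V5 X s} (hp : ∀ j, v j ≠ p) :
    payoff H v a p ≤ payoff H v a (v (.inl a)) := by
  rw [← util_update hv.1, ← util_eq_payoff hv.1]
  exact hv.2 _ (inl_mem_strategic a) p hp

theorem exists_isNClique_of_free [DecidableEq X] {v : A5 s → V5 X s}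
    (hv : (game5 X H s).IsEquilibrium v) (hs : 5 ≤ s) {l : Fin (s - 2)}
    (hl : ∀ j, v j ≠ nodeL X l) : ∃ C : Finset X, H.IsNClique s C := by
  have hout : ∀ a, (∀ l', v (.inl a) ≠ nodeL X l') →
      (∃ u, v (.inl a) = nodeX s u) ∧
        ∀ j ≠ a, (top5 X H s).Adj (v (.inl a)) (v (.inl j)) := by
    intro a ha
    have hlt := (half_lt_payoff_nodeL hv.1 hs a l).trans_le
      (payoff_le_of_isEquilibrium hv a hl)
    rcases strategic_location hv.1 a with ⟨u, h⟩ | ⟨l', h⟩ | ⟨t, h⟩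
    · refine ⟨⟨u, h⟩, fun j hj => ?_⟩
      rw [h] at hlt ⊢
      exact adj_of_le_stratNear (half_lt_payoff_nodeX hs hlt) hj
    · exact absurd h (ha l')
    · rw [h] at hlt
      exact absurd (payoff_node3_le hv.1 a t) hlt.not_ge
  obtain ⟨a, ha⟩ : ∃ a : Fin s, ∀ l', v (.inl a) ≠ nodeL X l' := by
    by_contra! hcon
    choose g hg using hcon
    have hinj : Function.Injective g := fun i j hij =>
      Sum.inl_injective (hv.1.1 ((hg i).trans (hij ▸ (hg j).symm)))
    have := Fintype.card_le_of_injective g hinj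
    simp at this
    omega
  have hX : ∀ j, ∃ u, v (.inl j) = nodeX s u := by
    intro j
    obtain ⟨⟨u, hu⟩, hadj⟩ := hout a ha
    by_cases hj : j = a
    · exact hj ▸ ⟨u, hu⟩
    · have h := hadj j hj
      rcases strategic_location hv.1 j with h' | ⟨l', h'⟩ | ⟨t, h'⟩
      · exact h'
      · simp [hu, h', top5, rel5] at h
      · simp [hu, h', top5, rel5] at h
  choose f hf using hX
  have hinj : Function.Injective f := fun i j hij =>
    Sum.inl_injective (hv.1.1 ((hf i).trans (hij ▸ (hf j).symm)))
  refine ⟨univ.image f, ?_, by simp [card_image_of_injective _ hinj]⟩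
  intro x hx y hy hxy
  obtain ⟨i, -, rfl⟩ := mem_image.1 (mem_coe.1 hx)
  obtain ⟨j, -, rfl⟩ := mem_image.1 (mem_coe.1 hy)
  have h := (hout i (by simp [hf])).2 j (fun h => hxy (h ▸ rfl))
  rw [hf, hf] at h
  simpa [top5, rel5, H.adj_comm (f j), hxy] using h

theorem exists_pair_of_full {v : A5 s → V5 X s} (hv : (game5 X H s).IsAssignment v)
    (hs : 5 ≤ s) (hl : ∀ l, ∃ j, v j = nodeL X l) :
    ∃ a b : Fin s, a ≠ b ∧ (∀ l, v (.inl a) ≠ nodeL X l) ∧ (∀ l, v (.inl b) ≠ nodeL X l) ∧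
      ∀ j, j = a ∨ j = b ∨ ∃ l, v (.inl j) = nodeL X l := by
  classical
  have hL : ∀ l, ∃ j, v (.inl j) = nodeL X l := by
    intro l
    obtain ⟨j | b, hj⟩ := hl l
    · exact ⟨j, hj⟩
    · rw [hv.2 _ (inr_notMem_strategic b)] at hj
      rcases b with b | b | b <;> simp [game5, loc5] at hj
  choose g hg using hL
  have hinj : Function.Injective g := by
    intro i j hij
    have := (hg i).symm.trans (hij ▸ hg j)
    simpa using this
  have hcard : #(univ.image g)ᶜ = 2 := by
    rw [card_compl, card_image_of_injective _ hinj]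
    simp
    omega
  obtain ⟨a, b, hab, heq⟩ := card_eq_two.1 hcard
  have hmem : ∀ j, j ∈ (univ.image g)ᶜ ↔ j = a ∨ j = b := by simp [heq]
  have hout : ∀ j, j = a ∨ j = b → ∀ l, v (.inl j) ≠ nodeL X l := by
    intro j hj l h
    have := (hmem j).2 hj
    simp only [mem_compl, mem_image, mem_univ, true_and, not_exists] at this
    exact this l (Sum.inl_injective (hv.1 ((hg l).trans h.symm)))
  refine ⟨a, b, hab, hout a (.inl rfl), hout b (.inr rfl), fun j => ?_⟩
  by_cases hj : j ∈ (univ.image g)ᶜ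
  · rcases (hmem j).1 hj with h | h
    · exact .inl h
    · exact .inr (.inl h)
  · simp only [mem_compl, mem_image, mem_univ, true_and, not_not] at hj
    obtain ⟨l, rfl⟩ := hj
    exact .inr (.inr ⟨l, hg l⟩)

open Classical in
theorem stratNear_of_full {v : A5 s → V5 X s} {a b : Fin s} (hab : a ≠ b)
    (hcov : ∀ j, j = a ∨ j = b ∨ ∃ l, v (.inl j) = nodeL X l) {p : V5 X s}
    (hp : ∀ l, ¬ (top5 X H s).Adj p (nodeL X l)) :
    stratNear H v a p = if (top5 X H s).Adj p (v (.inl b)) then 1 else 0 := by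
  have hsub : ∀ j, j ≠ a ∧ (top5 X H s).Adj p (v (.inl j)) ↔
      j = b ∧ (top5 X H s).Adj p (v (.inl b)) := by
    intro j
    constructor
    · rintro ⟨hj, h⟩
      rcases hcov j with rfl | rfl | ⟨l, hl⟩
      · exact absurd rfl hj
      · exact ⟨rfl, h⟩
      · exact absurd (hl ▸ h) (hp l)
    · rintro ⟨rfl, h⟩
      exact ⟨hab.symm, h⟩
  unfold stratNear
  simp only [hsub]
  split_ifs with h <;> simp [h, filter_eq']

theorem payoff_node3_of_full {v : A5 s → V5 X s} {a b : Fin s} (hab : a ≠ b)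
    (hcov : ∀ j, j = a ∨ j = b ∨ ∃ l, v (.inl j) = nodeL X l) {t' : Fin 3}
    (hb : v (.inl b) = node3 X s t') (t : Fin 3) :
    payoff H v a (node3 X s t) =
      if t = 0 ∧ t' = 1 then 1 / 2 else if t = 1 ∧ t' = 0 then 42 / 122
        else ![1 / 3, 41 / 121, 5 / 12] t := by
  classical
  rw [payoff_node3, stratNear_of_full hab hcov (by simp [top5, rel5]), hb]
  fin_cases t <;> fin_cases t' <;> simp [top5, rel5] <;> norm_num

theorem payoff_node3_ge (v : A5 s → V5 X s) (a : Fin s) (t : Fin 3) :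
    1 / 3 ≤ payoff H v a (node3 X s t) := by
  rw [payoff_node3, le_div_iff₀ (by fin_cases t <;> simp <;> positivity)]
  have : (0 : ℚ) ≤ stratNear H v a (node3 X s t) := by positivity
  fin_cases t <;> simp at this ⊢ <;> linarith

theorem node3_of_full [DecidableEq X] {v : A5 s → V5 X s}
    (hv : (game5 X H s).IsEquilibrium v) (hs : 5 ≤ s) {a b : Fin s} (hab : a ≠ b)
    (ha : ∀ l, v (.inl a) ≠ nodeL X l)
    (hcov : ∀ j, j = a ∨ j = b ∨ ∃ l, v (.inl j) = nodeL X l) :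
    ∃ t, v (.inl a) = node3 X s t := by
  classical
  rcases strategic_location hv.1 a with ⟨u, h⟩ | ⟨l', h⟩ | h
  · exfalso
    obtain ⟨t, ht⟩ : ∃ t, v (.inl b) ≠ node3 X s t := by
      by_contra! hcon
      simpa using (hcon 0).symm.trans (hcon 1)
    have hfree : ∀ j, v j ≠ node3 X s t := by
      rintro (j | j) hj
      · rcases hcov j with rfl | rfl | ⟨l, hl⟩
        · simp [h] at hj
        · exact ht hj
        · simp [hl] at hj
      · rw [hv.1.2 _ (inr_notMem_strategic j)] at hj
        rcases j with j | j | j <;> simp [game5, loc5] at hj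
    have hle := (payoff_node3_ge v a t).trans (payoff_le_of_isEquilibrium hv a hfree)
    rw [h, payoff_nodeX] at hle
    have hd : stratNear H v a (nodeX s u) ≤ 1 := by
      rw [stratNear_of_full hab hcov (by simp [top5, rel5])]
      split_ifs <;> simp
    have hd' : (stratNear H v a (nodeX s u) : ℚ) ≤ 1 := mod_cast hd
    have h3 : (3 : ℚ) ≤ (s - 2 : ℕ) := mod_cast (by omega : 3 ≤ s - 2)
    rw [le_div_iff₀ (by positivity)] at hle
    linarith
  · exact absurd h (ha l')
  · exact h

theorem exists_isNClique_of_isEquilibrium [DecidableEq X] {v : A5 s → V5 X s}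
    (hv : (game5 X H s).IsEquilibrium v) (hs : 5 ≤ s) :
    ∃ C : Finset X, H.IsNClique s C := by
  by_cases hl : ∃ l : Fin (s - 2), ∀ j, v j ≠ nodeL X l
  · obtain ⟨l, hl⟩ := hl
    exact exists_isNClique_of_free hv hs hl
  push Not at hl
  exfalso
  obtain ⟨a, b, hab, ha, hb, hcov⟩ := exists_pair_of_full hv.1 hs hl
  have hcov' : ∀ j, j = b ∨ j = a ∨ ∃ l, v (.inl j) = nodeL X l := fun j => by
    rcases hcov j with h | h | h <;> simp [h]
  obtain ⟨t, ht⟩ := node3_of_full hv hs hab ha hcov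
  obtain ⟨t', ht'⟩ := node3_of_full hv hs hab.symm hb hcov'
  have htt : t ≠ t' := by
    rintro rfl
    exact hab (Sum.inl_injective (hv.1.1 (ht.trans ht'.symm)))
  have hfree : ∀ r, r ≠ t → r ≠ t' → ∀ j, v j ≠ node3 X s r := by
    rintro r hr hr' (j | j) hj
    · rcases hcov j with rfl | rfl | ⟨l, hl⟩
      · rw [ht] at hj
        exact hr (by simpa using hj.symm)
      · rw [ht'] at hj
        exact hr' (by simpa using hj.symm)
      · simp [hl] at hj
    · rw [hv.1.2 _ (inr_notMem_strategic j)] at hj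
      rcases j with j | j | j <;> simp [game5, loc5] at hj
  have hA : ∀ r, r ≠ t → r ≠ t' → _ := fun r hr hr' =>
    payoff_le_of_isEquilibrium hv a (hfree r hr hr')
  have hB : ∀ r, r ≠ t → r ≠ t' → _ := fun r hr hr' =>
    payoff_le_of_isEquilibrium hv b (hfree r hr hr')
  simp only [ht, payoff_node3_of_full hab hcov ht'] at hA
  simp only [ht', payoff_node3_of_full hab.symm hcov' ht] at hB
  clear hfree ht ht'
  fin_cases t <;> fin_cases t'
  · exact htt rfl
  · exact absurd (hB 2 (by decide) (by decide)) (by simp; norm_num)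
  · exact absurd (hA 1 (by decide) (by decide)) (by simp; norm_num)
  · exact absurd (hA 2 (by decide) (by decide)) (by simp; norm_num)
  · exact htt rfl
  · exact absurd (hB 0 (by decide) (by decide)) (by simp; norm_num)
  · exact absurd (hB 1 (by decide) (by decide)) (by simp; norm_num)
  · exact absurd (hA 0 (by decide) (by decide)) (by simp; norm_num)
  · exact htt rfl

theorem exists_isEquilibrium_of_isNClique [DecidableEq X] (hs : 5 ≤ s) {C : Finset X}
    (hC : H.IsNClique s C) : ∃ v, (game5 X H s).IsEquilibrium v := by
  classical
  let e : Fin s ≃ C := (C.equivFinOfCardEq hC.card_eq).symm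
  let v : A5 s → V5 X s := Sum.elim (fun j => nodeX s (e j : X)) (fun b => loc5 X s (.inr b))
  have hX : ∀ j, v (.inl j) = nodeX s (e j : X) := fun _ => rfl
  have hv : (game5 X H s).IsAssignment v := by
    refine ⟨?_, ?_⟩
    · rintro (i | i | i | i) (j | j | j | j) h <;> simp [v, loc5] at h ⊢ <;> exact h
    · rintro (i | i) hi
      · exact absurd (inl_mem_strategic i) hi
      · rfl
  have hs' : (0 : ℚ) < (s - 2 : ℕ) := mod_cast (by omega : 0 < s - 2)
  have hcast : ((s - 1 : ℕ) : ℚ) = (s - 2 : ℕ) + 1 :=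
    mod_cast (by omega : s - 1 = s - 2 + 1)
  have hcast' : (s : ℚ) = (s - 2 : ℕ) + 2 := mod_cast (by omega : s = s - 2 + 2)
  have hself : ∀ a, payoff H v a (v (.inl a)) =
      ((s - 1 : ℕ) : ℚ) / ((s - 1 : ℕ) + (s - 2 : ℕ)) := by
    intro a
    have hd : stratNear H v a (nodeX s (e a : X)) = s - 1 := by
      have hadj : ∀ j, j ≠ a ∧ (top5 X H s).Adj (nodeX s (e a : X)) (v (.inl j)) ↔ j ≠ a := by
        refine fun j => and_iff_left_of_imp fun hj => ?_
        have hne : (e a : X) ≠ e j := fun h => hj (e.injective (Subtype.ext h.symm))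
        have := hC.isClique (e a).2 (e j).2 hne
        simp [hX, top5, rel5, this, hne]
      unfold stratNear
      simp only [hadj]
      simp [filter_ne']
    rw [hX, payoff_nodeX, hd]
  refine ⟨v, hv, ?_⟩
  rintro (a | a) ha p hp
  swap
  · exact absurd ha (inr_notMem_strategic a)
  rw [util_update hv, util_eq_payoff hv, hself]
  have hpos : (0 : ℚ) < (s - 1 : ℕ) + (s - 2 : ℕ) := by positivity
  rcases p with (u | w) | (l | i) | t | i
  · have hd : (stratNear H v a (nodeX s u) : ℚ) ≤ (s - 1 : ℕ) := mod_cast stratNear_le v a _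
    rw [payoff_nodeX, div_le_div_iff₀ (by positivity) hpos]
    nlinarith
  · exact absurd rfl (hp (.inr (.inl w)))
  · rw [payoff_nodeL hv hs, div_le_div_iff₀ (by rw [hcast']; positivity) hpos, hcast, hcast']
    nlinarith
  · exact absurd rfl (hp (.inr (.inr (.inl i))))
  · refine (payoff_node3_le hv a t).trans ?_
    rw [le_div_iff₀ hpos, hcast]
    linarith
  · exact absurd rfl (hp (.inr (.inr (.inr i))))

end Reduction5

/-- for s ≥ 5, the game above admits an equilibrium assignment iff H
contains a clique of size s. -/
theorem stmt5 (X : Type) [Fintype X] [DecidableEq X] (H : SimpleGraph X)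
    (s : ℕ) (hs : 5 ≤ s) :
    (∃ v, (game5 X H s).IsEquilibrium v) ↔ ∃ C : Finset X, H.IsNClique s C := by
  exact ⟨fun ⟨_, hv⟩ => Reduction5.exists_isNClique_of_isEquilibrium hv hs,
    fun ⟨_, hC⟩ => Reduction5.exists_isEquilibrium_of_isNClique hs hC⟩
end

section
/- Let H = (X,Y) be an undirected graph and let s be an integer with 2 ≤ s < |X|. Construct a 2-typed Schelling game with types red and blue, s strategic red agents and one stubborn blue agent, whose topology G has vertex set X ∪ {w} (w ∉ X) and edge set Y ∪ {{v,w} : v ∈ X}, with the stubborn blue agent placed at w. Then this game admits an assignment with social welfare at least s−1 if and only if H contains a clique of size s. -/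
/-- Agents: `s` strategic red agents (`Sum.inl`) and one stubborn blue agent (`Sum.inr`). -/
abbrev A6 (s : ℕ) : Type := Fin s ⊕ Unit

/-- Types: red = 0 for the strategic agents, blue = 1 for the stubborn agent. -/
def typ6 (s : ℕ) : A6 s → Fin 2
  | .inl _ => 0
  | .inr _ => 1

/-- The social network of the 2-typed game: distinct agents of the same type. -/
def net6 (s : ℕ) : SimpleGraph (A6 s) where
  Adj i j := i ≠ j ∧ typ6 s i = typ6 s j
  symm := ⟨fun _ _ h => ⟨Ne.symm h.1, h.2.symm⟩⟩
  loopless := ⟨fun _ h => h.1 rfl⟩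

/-- The topology: vertex set `X ∪ {w}` (with `w = none`), edge set
`Y ∪ {{v,w} : v ∈ X}`. -/
def top6 (X : Type) (H : SimpleGraph X) : SimpleGraph (Option X) :=
  SimpleGraph.fromRel (fun p q => match p, q with
    | some u, some u' => H.Adj u u'
    | some _, none => True
    | _, _ => False)

/-- The 2-typed Schelling game of the reduction: `s` strategic red agents, one stubborn
blue agent placed at `w = none`. -/
def game6 (X : Type) (H : SimpleGraph X) (s : ℕ) : SchellingGame (A6 s) (Option X) where
  strategic := Finset.univ.filter (fun p => p.isLeft = true)
  net := net6 s
  top := top6 X H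
  loc := fun _ => none

/-- A placement of the red agents on vertices of `H`, extended by putting the blue agent
at `w = none`. -/
def place6 {X : Type} {s : ℕ} (p : Fin s → X) : A6 s → Option X
  | .inl i => some (p i)
  | .inr _ => none

theorem place6_injective {X : Type} {s : ℕ} {p : Fin s → X} (hp : Function.Injective p) :
    Function.Injective (place6 p) := by
  rintro (i | i) (j | j) h
  · exact congrArg Sum.inl (hp (Option.some.inj h))
  · cases h
  · cases h
  · rfl

theorem top6_adj_some {X : Type} {H : SimpleGraph X} {x y : X} :
    (top6 X H).Adj (some x) (some y) ↔ H.Adj x y := by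
  simp only [top6, SimpleGraph.fromRel_adj, ne_eq, Option.some.injEq, H.adj_comm y x, or_self,
    and_iff_right_iff_imp]
  exact fun h => h.ne

theorem top6_adj_none {X : Type} {H : SimpleGraph X} {x : X} :
    (top6 X H).Adj (some x) none := by
  simp [top6]

theorem game6_isAssignment_iff {X : Type} {H : SimpleGraph X} {s : ℕ} {v : A6 s → Option X} :
    (game6 X H s).IsAssignment v ↔ ∃ p : Fin s → X, Function.Injective p ∧ v = place6 p := by
  constructor
  · rintro ⟨hinj, hloc⟩
    have hw : v (.inr ()) = none := hloc (.inr ()) (by simp [game6])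
    have hsome : ∀ i : Fin s, ∃ x, v (.inl i) = some x := fun i =>
      Option.ne_none_iff_exists'.mp fun h => Sum.inl_ne_inr (hinj (h.trans hw.symm))
    choose p hp using hsome
    refine ⟨p, fun i j hij => Sum.inl_injective (hinj ?_), ?_⟩
    · rw [hp, hp, hij]
    · funext a
      rcases a with i | u
      · exact hp i
      · exact hw
  · rintro ⟨p, hp, rfl⟩
    refine ⟨place6_injective hp, ?_⟩
    rintro (i | u) hi
    · simp [game6] at hi
    · rfl

theorem game6_fcount_place6 {X : Type} {H : SimpleGraph X} {s : ℕ} (p : Fin s → X) (i : Fin s) :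
    (game6 X H s).fcount (place6 p) (.inl i) = ((H.comap p).neighborSet i).ncard := by
  rw [SchellingGame.fcount, ← Set.ncard_image_of_injective _ Sum.inl_injective,
    ← Nat.card_coe_set_eq]
  refine Nat.card_congr (Equiv.setCongr (s := {j : A6 s | _}) ?_)
  ext (j | j)
  · have : H.Adj (p i) (p j) → i ≠ j := fun h hij => h.ne (congrArg p hij)
    simpa [game6, net6, typ6, place6, top6_adj_some] using this
  · simp [game6, net6, typ6]

theorem game6_ecount_place6 {X : Type} {H : SimpleGraph X} {s : ℕ} (p : Fin s → X) (i : Fin s) :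
    (game6 X H s).ecount (place6 p) (.inl i) = 1 := by
  rw [SchellingGame.ecount, ← Set.ncard_singleton (Sum.inr () : A6 s), ← Nat.card_coe_set_eq]
  refine Nat.card_congr (Equiv.setCongr (s := {j : A6 s | _}) ?_)
  ext (j | j)
  · simp only [Set.mem_ofPred_eq, Set.mem_singleton_iff, reduceCtorEq, iff_false]
    rintro ⟨hne, hnet, -⟩
    exact hnet ⟨hne.symm, rfl⟩
  · simp [game6, net6, typ6, place6, top6_adj_none]

theorem game6_SW_place6 {X : Type} {H : SimpleGraph X} {s : ℕ} (p : Fin s → X) :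
    (game6 X H s).SW (place6 p) =
      ∑ i, (((H.comap p).neighborSet i).ncard : ℚ) / (((H.comap p).neighborSet i).ncard + 1) := by
  have hstrat : (game6 X H s).strategic = Finset.univ.map Function.Embedding.inl := by
    ext (j | j) <;> simp [game6]
  rw [SchellingGame.SW, hstrat, Finset.sum_map]
  refine Finset.sum_congr rfl fun i _ => ?_
  rw [Function.Embedding.inl_apply, SchellingGame.util, game6_fcount_place6, game6_ecount_place6]
  split_ifs with h
  · simp [h]
  · simp

theorem ncard_neighborSet_add_one_le {s : ℕ} (K : SimpleGraph (Fin s)) (i : Fin s) :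
    (K.neighborSet i).ncard + 1 ≤ s := by
  have h : i ∉ K.neighborSet i := K.irrefl
  rw [← Set.ncard_insert_of_notMem h]
  simpa using Set.ncard_le_ncard (Set.subset_univ (insert i (K.neighborSet i)))

theorem ncard_neighborSet_add_one_eq_iff {s : ℕ} (K : SimpleGraph (Fin s)) (i : Fin s) :
    (K.neighborSet i).ncard + 1 = s ↔ ∀ j, i ≠ j → K.Adj i j := by
  have h : i ∉ K.neighborSet i := K.irrefl
  rw [← Set.ncard_insert_of_notMem h]
  have hcard : (insert i (K.neighborSet i)).ncard = s ↔ insert i (K.neighborSet i) = Set.univ := by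
    simpa using (Set.eq_univ_iff_ncard (insert i (K.neighborSet i))).symm
  rw [hcard, Set.eq_univ_iff_forall]
  refine forall_congr' fun j => ?_
  rw [Set.mem_insert_iff, SimpleGraph.mem_neighborSet, or_iff_not_imp_left, eq_comm]

/-- The sum of `d / (d + 1)` over the degrees `d` of a graph on `s ≥ 1` vertices reaches `s - 1`
exactly when the graph is complete. -/
theorem sub_one_le_sum_degree_div_iff {s : ℕ} (hs : 0 < s) (K : SimpleGraph (Fin s)) :
    (s : ℚ) - 1 ≤ ∑ i, ((K.neighborSet i).ncard : ℚ) / ((K.neighborSet i).ncard + 1) ↔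
      K = ⊤ := by
  have hs' : (0 : ℚ) < s := by exact_mod_cast hs
  have hterm : ∀ d : ℕ, (d : ℚ) / (d + 1) = 1 - 1 / (d + 1) := fun d => by
    field_simp; ring
  have hconst : (s : ℚ) - 1 = ∑ _i : Fin s, (1 - 1 / (s : ℚ)) := by
    simp; field_simp
  have hle : ∀ i, ((K.neighborSet i).ncard : ℚ) / ((K.neighborSet i).ncard + 1) ≤ 1 - 1 / s := by
    intro i
    rw [hterm]
    have : ((K.neighborSet i).ncard : ℚ) + 1 ≤ s := by
      exact_mod_cast ncard_neighborSet_add_one_le K i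
    gcongr
  constructor
  · intro h
    rw [hconst] at h
    have heq := (Finset.sum_eq_sum_iff_of_le fun i _ => hle i).mp
      (le_antisymm (Finset.sum_le_sum fun i _ => hle i) h)
    rw [eq_top_iff]
    intro i j hij
    refine (ncard_neighborSet_add_one_eq_iff K i).mp ?_ j hij
    have hi := heq i (Finset.mem_univ i)
    rw [hterm, sub_right_inj, one_div, one_div, inv_inj] at hi
    exact_mod_cast hi
  · rintro rfl
    rw [hconst]
    refine Finset.sum_le_sum fun i _ => ?_
    have : (((⊤ : SimpleGraph (Fin s)).neighborSet i).ncard : ℚ) + 1 = s := by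
      exact_mod_cast (ncard_neighborSet_add_one_eq_iff ⊤ i).mpr fun j hij => hij
    rw [hterm, this]

theorem exists_comap_eq_top_iff_exists_isNClique {X : Type} {H : SimpleGraph X} {s : ℕ} :
    (∃ p : Fin s → X, Function.Injective p ∧ H.comap p = ⊤) ↔
      ∃ C : Finset X, H.IsNClique s C := by
  constructor
  · rintro ⟨p, hp, htop⟩
    refine ⟨Finset.univ.map ⟨p, hp⟩, ?_, by simp⟩
    intro x hx y hy hxy
    simp only [Finset.coe_map, Function.Embedding.coeFn_mk, Finset.coe_univ, Set.image_univ,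
      Set.mem_range] at hx hy
    obtain ⟨i, rfl⟩ := hx
    obtain ⟨j, rfl⟩ := hy
    have : (H.comap p).Adj i j := by
      rw [htop]
      exact fun hij => hxy (congrArg p hij)
    exact this
  · rintro ⟨C, hC, hcard⟩
    have e := (C.equivFinOfCardEq hcard).symm
    have hinj : Function.Injective fun i => (e i : X) :=
      Subtype.val_injective.comp e.injective
    refine ⟨fun i => e i, hinj, ?_⟩
    rw [eq_top_iff]
    intro i j hij
    exact hC (e i).2 (e j).2 (hinj.ne hij)

/-- the game above admits an assignment of social welfare at least s - 1
iff H contains a clique of size s. -/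
theorem stmt6 (X : Type) [Fintype X] [DecidableEq X] (H : SimpleGraph X)
    (s : ℕ) (hs : 2 ≤ s) (hsX : s < Fintype.card X) :
    (∃ v, (game6 X H s).IsAssignment v ∧ (s : ℚ) - 1 ≤ (game6 X H s).SW v) ↔
      ∃ C : Finset X, H.IsNClique s C := by
  simp only [game6_isAssignment_iff]
  rw [← exists_comap_eq_top_iff_exists_isNClique]
  constructor
  · rintro ⟨_, ⟨p, hp, rfl⟩, hSW⟩
    rw [game6_SW_place6, sub_one_le_sum_degree_div_iff (by omega)] at hSW
    exact ⟨p, hp, hSW⟩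
  · rintro ⟨p, hp, htop⟩
    refine ⟨_, ⟨p, hp, rfl⟩, ?_⟩
    rwa [game6_SW_place6, sub_one_le_sum_degree_div_iff (by omega)]
end
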